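/- Let X ∈ ℝ^{n×d} (n ≥ d, rank(X) = d) with coherence μ, let y ∈ ℝ^n, β_lsr = (XᵀX)⁻¹Xᵀy, and let U ∈ ℝ^{n×d} have orthonormal columns spanning col(X). Let θ₁ ∈ (0, 1), θ₂ > 1, and δ₁, δ₂, δ₃ ∈ (0, 1). Suppose c ≤ n satisfies both c·(θ₁ ln θ₁ − θ₁ + 1) ≥ μ·d·ln(d/δ₁) and c·(θ₂ ln θ₂ − θ₂ + 1) ≥ μ·d·ln(d/δ₂). Let C be a uniformly distributed random c-element subset of {1, …, n}. Then with probability at least 1 − δ₁ − δ₂ − δ₃, every minimizer β̃ of β ↦ Σ_{i∈C}(y_i − x^(i)β)² satisfies ‖UᵀX(β_lsr − β̃)‖₂ ≤ (1/θ₁)·√(θ₂/δ₃)·‖(I_n − UUᵀ)y‖₂. -/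

import Mathlib

open Matrix BigOperators
open scoped Classical

/-- Euclidean norm of a real vector. -/
noncomputable def vnorm {m : ℕ} (v : Fin m → ℝ) : ℝ := Real.sqrt (∑ i, v i ^ 2)

/-!
Write `r = y - UUᵀy` and `w = UᵀX(β_lsr - β̃)`. The fitted values of `β_lsr` are `UUᵀy`, and a
minimizer `β̃` of the sampled loss makes `y - Xβ̃` orthogonal to `col X` on the sample, so
`∑_{i ∈ C} (Uw)ᵢ² ≤ ∑_{i ∈ C} rᵢ²`. The left side is at least `θ₁ (c / n) ‖w‖²` by a matrix Chernoff
bound for the rows of `U`, and the right side is at most `(c / n) ‖r‖² / δ₃` by Markov's inequality.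

The Chernoff bound is proved directly for sampling without replacement. By the Golden–Thompson
inequality (from the Lie product formula and `|tr (AB)^(2^k)| ≤ tr (A^(2^k) B^(2^k))`), the function
`φ = tr exp` satisfies `2 φ(A) ≤ φ(A + V) + φ(A - V)`. For any such `φ`, averaging over the
exchange of one sampled element for another shows that drawing the next element from the whole
population, rather than from the elements not yet drawn, can only increase the expectation of `φ` of
the partial sum, so the moments of the sample sum are controlled one draw at a time.
-/

section LieProduct

open Filter Topology
open NormedSpace (exp)

theorem norm_pow_sub_pow_le {R : Type*} [SeminormedRing R] [NormOneClass R] (a b : R) (n : ℕ) :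
    ‖a ^ n - b ^ n‖ ≤ ‖a - b‖ * n * max ‖a‖ ‖b‖ ^ (n - 1) := by
  induction n with
  | zero => simp
  | succ n ih =>
    have ha : ‖a ^ n‖ ≤ max ‖a‖ ‖b‖ ^ n :=
      (norm_pow_le a n).trans (pow_le_pow_left₀ (norm_nonneg a) (le_max_left _ _) n)
    calc ‖a ^ (n + 1) - b ^ (n + 1)‖
        = ‖a ^ n * (a - b) + (a ^ n - b ^ n) * b‖ := by simp only [pow_succ]; noncomm_ring
      _ ≤ ‖a ^ n‖ * ‖a - b‖ + ‖a ^ n - b ^ n‖ * ‖b‖ :=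
          (norm_add_le _ _).trans (add_le_add (norm_mul_le _ _) (norm_mul_le _ _))
      _ ≤ max ‖a‖ ‖b‖ ^ n * ‖a - b‖ +
            ‖a - b‖ * n * max ‖a‖ ‖b‖ ^ (n - 1) * max ‖a‖ ‖b‖ := by
          gcongr
          exact le_max_right _ _
      _ = ‖a - b‖ * (n + 1 : ℕ) * max ‖a‖ ‖b‖ ^ (n + 1 - 1) := by
          cases n with
          | zero => simp
          | succ n => simp only [Nat.add_sub_cancel, pow_succ]; push_cast; ring

variable {𝔸 : Type*} [NormedRing 𝔸] [NormedAlgebra ℝ 𝔸]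

theorem tendsto_nat_mul_norm_exp_mul_exp_sub_exp_add [CompleteSpace 𝔸] (a b : 𝔸) :
    Tendsto (fun n : ℕ => (n : ℝ) *
      ‖exp ((n : ℝ)⁻¹ • a) * exp ((n : ℝ)⁻¹ • b) - exp ((n : ℝ)⁻¹ • a + (n : ℝ)⁻¹ • b)‖)
      atTop (𝓝 0) := by
  have hderiv :
      HasDerivAt (fun t : ℝ => exp (t • a) * exp (t • b) - exp (t • (a + b))) 0 0 := by
    have := ((hasDerivAt_exp_smul_const a (0 : ℝ)).mul
      (hasDerivAt_exp_smul_const b (0 : ℝ))).sub (hasDerivAt_exp_smul_const (a + b) (0 : ℝ))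
    convert! this using 1
    simp
  have hlim := (hasDerivAt_iff_tendsto.1 hderiv).comp (tendsto_inv_atTop_nhds_zero_nat (𝕜 := ℝ))
  simpa [Function.comp_def] using hlim

variable [NormOneClass 𝔸]

theorem norm_exp_le_exp_norm (a : 𝔸) : ‖exp a‖ ≤ Real.exp ‖a‖ := by
  rw [NormedSpace.exp_eq_tsum ℝ, Real.exp_eq_exp_ℝ, NormedSpace.exp_eq_tsum ℝ]
  refine tsum_of_norm_bounded
    (NormedSpace.expSeries_summable' (𝕂 := ℝ) ‖a‖).hasSum fun k => ?_
  rw [norm_smul, norm_inv, RCLike.norm_natCast, smul_eq_mul]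
  gcongr
  exact norm_pow_le a k

theorem norm_exp_mul_exp_pow_sub_exp_pow_le (a b : 𝔸) (n : ℕ) :
    ‖(exp a * exp b) ^ n - exp (a + b) ^ n‖ ≤
      n * ‖exp a * exp b - exp (a + b)‖ * Real.exp (n * (‖a‖ + ‖b‖)) := by
  have hmul : ‖exp a * exp b‖ ≤ Real.exp (‖a‖ + ‖b‖) := by
    rw [Real.exp_add]
    exact norm_mul_le_of_le (norm_exp_le_exp_norm a) (norm_exp_le_exp_norm b)
  have hadd : ‖exp (a + b)‖ ≤ Real.exp (‖a‖ + ‖b‖) :=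
    (norm_exp_le_exp_norm _).trans (Real.exp_le_exp.2 (norm_add_le a b))
  calc ‖(exp a * exp b) ^ n - exp (a + b) ^ n‖
      ≤ ‖exp a * exp b - exp (a + b)‖ * n * max ‖exp a * exp b‖ ‖exp (a + b)‖ ^ (n - 1) :=
        norm_pow_sub_pow_le _ _ n
    _ ≤ ‖exp a * exp b - exp (a + b)‖ * n * Real.exp (‖a‖ + ‖b‖) ^ n := by
        gcongr
        exact (pow_le_pow_left₀ (by positivity) (max_le hmul hadd) _).trans
          (pow_le_pow_right₀ (Real.one_le_exp (by positivity)) (Nat.sub_le n 1))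
    _ = n * ‖exp a * exp b - exp (a + b)‖ * Real.exp (n * (‖a‖ + ‖b‖)) := by
        rw [Real.exp_nat_mul, mul_comm (n : ℝ)]

theorem tendsto_exp_mul_exp_pow [CompleteSpace 𝔸] (a b : 𝔸) :
    Tendsto (fun n : ℕ => (exp ((n : ℝ)⁻¹ • a) * exp ((n : ℝ)⁻¹ • b)) ^ n) atTop
      (𝓝 (exp (a + b))) := by
  let _ : NormedAlgebra ℚ 𝔸 := NormedAlgebra.restrictScalars ℚ ℝ 𝔸
  have hbound := (tendsto_nat_mul_norm_exp_mul_exp_sub_exp_add a b).mul_const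
    (Real.exp (‖a‖ + ‖b‖))
  rw [zero_mul] at hbound
  rw [tendsto_iff_norm_sub_tendsto_zero]
  refine squeeze_zero' (Eventually.of_forall fun _ => norm_nonneg _) ?_ hbound
  filter_upwards [eventually_ne_atTop 0] with n hn
  have hn' : (n : ℝ) ≠ 0 := Nat.cast_ne_zero.2 hn
  have hpow : exp ((n : ℝ)⁻¹ • a + (n : ℝ)⁻¹ • b) ^ n = exp (a + b) := by
    rw [← smul_add, ← NormedSpace.exp_nsmul, ← Nat.cast_smul_eq_nsmul ℝ, smul_inv_smul₀ hn']
  have hnorm : n * (‖(n : ℝ)⁻¹ • a‖ + ‖(n : ℝ)⁻¹ • b‖) = ‖a‖ + ‖b‖ := by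
    rw [norm_smul, norm_smul, norm_inv, RCLike.norm_natCast, ← mul_add, mul_inv_cancel_left₀ hn']
  simpa only [hpow, hnorm] using
    norm_exp_mul_exp_pow_sub_exp_pow_le ((n : ℝ)⁻¹ • a) ((n : ℝ)⁻¹ • b) n

end LieProduct

section TraceInequalities

open Filter Topology
open NormedSpace (exp)
open scoped ComplexOrder MatrixOrder

variable {𝕜 m n : Type*} [RCLike 𝕜] [Fintype m] [Fintype n]

theorem two_mul_re_trace_mul_le (A : Matrix m n 𝕜) (B : Matrix n m 𝕜) :
    2 * RCLike.re (trace (A * B)) ≤ RCLike.re (trace (A * Aᴴ)) + RCLike.re (trace (Bᴴ * B)) := by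
  have hnonneg := (RCLike.nonneg_iff.1
    (posSemidef_self_mul_conjTranspose (A - Bᴴ)).trace_nonneg).1
  have hconj : RCLike.re (trace (Bᴴ * Aᴴ)) = RCLike.re (trace (A * B)) := by
    rw [← conjTranspose_mul, trace_conjTranspose, RCLike.star_def, RCLike.conj_re]
  simp only [conjTranspose_sub, conjTranspose_conjTranspose, Matrix.sub_mul, Matrix.mul_sub,
    trace_sub, map_sub, hconj] at hnonneg
  linarith

theorem re_trace_mul_le_re_trace_mul {P A B : Matrix m m 𝕜} (hP : P.PosSemidef) (hAB : A ≤ B) :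
    RCLike.re (trace (P * A)) ≤ RCLike.re (trace (P * B)) := by
  classical
  obtain ⟨Q, rfl⟩ := CStarAlgebra.nonneg_iff_eq_star_mul_self.1 hP.nonneg
  have hnonneg := (RCLike.nonneg_iff.1
    ((Matrix.le_iff.1 hAB).mul_mul_conjTranspose_same Q).trace_nonneg).1
  rw [trace_mul_comm, ← mul_assoc, mul_sub, trace_sub, map_sub, ← star_eq_conjTranspose] at hnonneg
  linarith

variable [DecidableEq m]

theorem trace_mul_pow_comm {R : Type*} [CommSemiring R] (A B : Matrix m m R) (k : ℕ) :
    trace ((A * B) ^ k) = trace ((B * A) ^ k) := by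
  cases k with
  | zero => simp
  | succ k =>
    rw [pow_succ, ← mul_assoc, mul_pow_mul, trace_mul_comm, ← mul_assoc, ← pow_succ']

/-- The real trace of the matrix exponential of `A`, the potential function of the matrix
Chernoff argument. It is the trace itself when `A` is Hermitian. -/
noncomputable def traceExp (A : Matrix m m 𝕜) : ℝ := RCLike.re (trace (exp A))

theorem re_trace_pow_two_pow_le (k : ℕ) :
    (∀ A : Matrix m m 𝕜,
      RCLike.re (trace (A ^ 2 ^ (k + 1))) ≤ RCLike.re (trace ((A * Aᴴ) ^ 2 ^ k))) ∧
    ∀ P Q : Matrix m m 𝕜, P.IsHermitian → Q.IsHermitian →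
      RCLike.re (trace ((P * Q) ^ 2 ^ k)) ≤ RCLike.re (trace (P ^ 2 ^ k * Q ^ 2 ^ k)) := by
  induction k with
  | zero =>
    refine ⟨fun A => ?_, fun P Q _ _ => by simp⟩
    have hAA := two_mul_re_trace_mul_le A A
    rw [trace_mul_comm Aᴴ A] at hAA
    simp only [zero_add, pow_one, pow_zero, pow_two]
    linarith
  | succ k ih =>
    obtain ⟨hsingle, hproduct⟩ := ih
    refine ⟨fun A => ?_, fun P Q hP hQ => ?_⟩
    · have hl := isHermitian_mul_conjTranspose_self A
      have hr := isHermitian_conjTranspose_mul_self A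
      have hcycle : trace ((A ^ 2 * (A ^ 2)ᴴ) ^ 2 ^ k) = trace ((A * Aᴴ * (Aᴴ * A)) ^ 2 ^ k) := by
        rw [pow_two, conjTranspose_mul, mul_assoc A A, trace_mul_pow_comm]
        simp only [mul_assoc]
      have hamgm := two_mul_re_trace_mul_le ((A * Aᴴ) ^ 2 ^ k) ((Aᴴ * A) ^ 2 ^ k)
      rw [(hl.pow _).eq, (hr.pow _).eq, ← pow_add, ← pow_add, ← two_mul, ← pow_succ',
        trace_mul_pow_comm Aᴴ A] at hamgm
      have hsquare := hsingle (A ^ 2)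
      rw [← pow_mul, ← pow_succ', hcycle] at hsquare
      linarith [hproduct _ _ hl hr]
    · have hcycle : trace ((P * Q * (P * Q)ᴴ) ^ 2 ^ k) = trace ((P ^ 2 * Q ^ 2) ^ 2 ^ k) := by
        rw [conjTranspose_mul, hP.eq, hQ.eq, ← mul_assoc, trace_mul_pow_comm, pow_two, pow_two]
        simp only [mul_assoc]
      have hsquares := hproduct _ _ (hP.pow 2) (hQ.pow 2)
      rw [← pow_mul, ← pow_mul, ← pow_succ', ← hcycle] at hsquares
      exact (hsingle (P * Q)).trans hsquares

theorem golden_thompson {A B : Matrix m m 𝕜} (hA : A.IsHermitian) (hB : B.IsHermitian) :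
    traceExp (A + B) ≤ RCLike.re (trace (exp A * exp B)) := by
  rcases isEmpty_or_nonempty m with _ | _
  · simp [traceExp, trace]
  let _ : NormedRing (Matrix m m 𝕜) := Matrix.linftyOpNormedRing
  let _ : NormedAlgebra ℝ (Matrix m m 𝕜) := Matrix.linftyOpNormedAlgebra
  have : NormOneClass (Matrix m m 𝕜) := Matrix.linfty_opNormOneClass
  have hlie := (tendsto_exp_mul_exp_pow A B).comp (tendsto_pow_atTop_atTop_of_one_lt one_lt_two)
  have htrace : Continuous fun C : Matrix m m 𝕜 => RCLike.re (trace C) :=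
    RCLike.continuous_re.comp continuous_id.matrix_trace
  refine le_of_tendsto ((htrace.tendsto _).comp hlie) (Eventually.of_forall fun k => ?_)
  have hpow (C : Matrix m m 𝕜) : exp ((((2 ^ k : ℕ) : ℝ))⁻¹ • C) ^ 2 ^ k = exp C := by
    rw [← Matrix.exp_nsmul, ← Nat.cast_smul_eq_nsmul ℝ, smul_inv_smul₀ (by positivity)]
  have hle := (re_trace_pow_two_pow_le k).2 _ _
    (hA.smul (IsSelfAdjoint.all (((2 ^ k : ℕ) : ℝ))⁻¹)).exp
    (hB.smul (IsSelfAdjoint.all (((2 ^ k : ℕ) : ℝ))⁻¹)).exp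
  rwa [hpow, hpow] at hle

theorem exp_half_mul_self (A : Matrix m m 𝕜) :
    exp ((1 / 2 : ℝ) • A) * exp ((1 / 2 : ℝ) • A) = exp A := by
  rw [← Matrix.exp_add_of_commute _ _ (Commute.refl _), ← add_smul]
  norm_num

theorem two_mul_traceExp_le {A D : Matrix m m 𝕜} (hA : A.IsHermitian) (hD : D.IsHermitian) :
    2 * traceExp A ≤ traceExp (A + D) + traceExp (A - D) := by
  have hadd := (hA.add hD).smul (IsSelfAdjoint.all (1 / 2 : ℝ))
  have hsub := (hA.sub hD).smul (IsSelfAdjoint.all (1 / 2 : ℝ))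
  have hmid : (1 / 2 : ℝ) • (A + D) + (1 / 2 : ℝ) • (A - D) = A := by module
  have hgt := golden_thompson hadd hsub
  have hamgm := two_mul_re_trace_mul_le (exp ((1 / 2 : ℝ) • (A + D))) (exp ((1 / 2 : ℝ) • (A - D)))
  rw [hadd.exp.eq, hsub.exp.eq, exp_half_mul_self, exp_half_mul_self] at hamgm
  rw [hmid] at hgt
  simp only [traceExp] at hgt ⊢
  linarith

theorem posSemidef_exp {A : Matrix m m 𝕜} (hA : A.IsHermitian) : (exp A).PosSemidef := by
  rw [← exp_half_mul_self]
  nth_rw 2 [← (hA.smul (IsSelfAdjoint.all (1 / 2 : ℝ))).exp.eq]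
  exact posSemidef_self_mul_conjTranspose _

theorem traceExp_nonneg {A : Matrix m m 𝕜} (hA : A.IsHermitian) : 0 ≤ traceExp A :=
  (RCLike.nonneg_iff.1 (posSemidef_exp hA).trace_nonneg).1

theorem exp_eq_cfc {A : Matrix m m 𝕜} (hA : A.IsHermitian) : exp A = cfc Real.exp A := by
  have hexp : exp (RCLike.ofReal ∘ hA.eigenvalues : m → 𝕜) =
      RCLike.ofReal ∘ Real.exp ∘ hA.eigenvalues := by
    ext i
    simpa [Real.exp_eq_exp_ℝ] using (NormedSpace.algebraMap_exp_comm (𝔸 := 𝕜) _).symm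
  have hconj := Matrix.exp_units_conj (Unitary.toUnits hA.eigenvectorUnitary)
    (diagonal (RCLike.ofReal ∘ hA.eigenvalues : m → 𝕜))
  rw [Matrix.exp_diagonal, hexp] at hconj
  rw [hA.cfc_eq, IsHermitian.cfc, Unitary.conjStarAlgAut_apply]
  conv_lhs => rw [hA.spectral_theorem, Unitary.conjStarAlgAut_apply]
  exact hconj

theorem exp_mul_le_one_add {M x : ℝ} (hM : 0 < M) (hx : x ∈ Set.Icc 0 M) (s : ℝ) :
    Real.exp (s * x) ≤ 1 + (Real.exp (s * M) - 1) / M * x := by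
  have hconv := convexOn_exp.2 (Set.mem_univ (s * M)) (Set.mem_univ 0)
    (div_nonneg hx.1 hM.le) (sub_nonneg.2 ((div_le_one hM).2 hx.2)) (add_sub_cancel _ _)
  have hpoint : x / M * (s * M) = s * x := by field_simp
  simp only [smul_eq_mul, mul_zero, add_zero, Real.exp_zero, mul_one, hpoint] at hconv
  exact hconv.trans_eq (by ring)

theorem exp_smul_le {A : Matrix m m 𝕜} (hA : 0 ≤ A) {M : ℝ} (hM : 0 < M)
    (hAM : A ≤ M • (1 : Matrix m m 𝕜)) (s : ℝ) :
    exp (s • A) ≤ 1 + ((Real.exp (s * M) - 1) / M) • A := by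
  have hsa : IsSelfAdjoint A := .of_nonneg hA
  have hspec : ∀ x ∈ spectrum ℝ A, x ∈ Set.Icc 0 M := fun x hx =>
    ⟨spectrum_nonneg_of_nonneg hA hx,
      (le_algebraMap_iff_spectrum_le hsa).1 (by rwa [Algebra.algebraMap_eq_smul_one]) x hx⟩
  rw [exp_eq_cfc (IsSelfAdjoint.smul (IsSelfAdjoint.all s) hsa),
    ← cfc_comp_smul s Real.exp A,
    ← cfc_const_mul_id ((Real.exp (s * M) - 1) / M) A,
    ← map_one (algebraMap ℝ (Matrix m m 𝕜)),
    ← cfc_const_add 1 _ A]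
  exact cfc_mono fun x hx => exp_mul_le_one_add hM (hspec x hx) s

theorem traceExp_add_smul_le {A B : Matrix m m 𝕜} (hA : A.IsHermitian) (hB : 0 ≤ B) {M : ℝ}
    (hM : 0 < M) (hBM : B ≤ M • (1 : Matrix m m 𝕜)) (s : ℝ) :
    traceExp (A + s • B) ≤
      traceExp A + (Real.exp (s * M) - 1) / M * RCLike.re (trace (exp A * B)) := by
  have hBs : (s • B).IsHermitian :=
    (nonneg_iff_posSemidef.1 hB).isHermitian.smul (IsSelfAdjoint.all s)
  calc traceExp (A + s • B) ≤ RCLike.re (trace (exp A * exp (s • B))) := golden_thompson hA hBs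
    _ ≤ RCLike.re (trace (exp A * (1 + ((Real.exp (s * M) - 1) / M) • B))) :=
        re_trace_mul_le_re_trace_mul (posSemidef_exp hA) (exp_smul_le hB hM hBM s)
    _ = traceExp A + (Real.exp (s * M) - 1) / M * RCLike.re (trace (exp A * B)) := by
        rw [mul_add, mul_one, mul_smul_comm, trace_add, trace_smul, map_add, RCLike.smul_re,
          traceExp]

theorem traceExp_eq_sum_exp_eigenvalues {A : Matrix m m 𝕜} (hA : A.IsHermitian) :
    traceExp A = ∑ i, Real.exp (hA.eigenvalues i) := by
  rw [traceExp, exp_eq_cfc hA, hA.cfc_eq,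
    IsHermitian.cfc, Unitary.conjStarAlgAut_apply, trace_mul_cycle, Unitary.coe_star_mul_self,
    one_mul, trace_diagonal]
  simp [Function.comp_def]

theorem le_smul_one_of_traceExp_le {A : Matrix m m 𝕜} (hA : A.IsHermitian) {t : ℝ}
    (hAt : traceExp A ≤ Real.exp t) : A ≤ t • (1 : Matrix m m 𝕜) := by
  rw [← Algebra.algebraMap_eq_smul_one, le_algebraMap_iff_spectrum_le hA.isSelfAdjoint,
    hA.spectrum_real_eq_range_eigenvalues, Set.forall_mem_range]
  intro i
  rw [traceExp_eq_sum_exp_eigenvalues hA] at hAt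
  exact Real.exp_le_exp.1 ((Finset.single_le_sum (f := fun i => Real.exp (hA.eigenvalues i))
    (fun i _ => (Real.exp_pos _).le) (Finset.mem_univ i)).trans hAt)

end TraceInequalities

section SamplingWithoutReplacement

open Finset

variable {ι : Type*} [Fintype ι]

/-- The probability of the event `p` under a uniformly random `c`-element subset of `ι`. It is `0`
by convention when `ι` has fewer than `c` elements. -/
noncomputable def sampleProb (c : ℕ) (p : Finset ι → Prop) : ℝ :=
  #{S ∈ powersetCard c univ | p S} / (Fintype.card ι).choose c

theorem card_filter_div_choose_eq_sampleProb {n : ℕ} (c : ℕ) (p : Finset (Fin n) → Prop) :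
    #{S ∈ powersetCard c univ | p S} / (n.choose c : ℝ) = sampleProb c p := by
  rw [sampleProb, Fintype.card_fin]

theorem sampleProb_eq_expect (c : ℕ) (p : Finset ι → Prop) :
    sampleProb c p = 𝔼 S ∈ powersetCard c univ, if p S then (1 : ℝ) else 0 := by
  rw [sampleProb, expect_eq_sum_div_card, sum_boole, card_powersetCard, card_univ]

theorem sampleProb_eq_one {c : ℕ} (hc : c ≤ Fintype.card ι) {p : Finset ι → Prop}
    (hp : ∀ S, p S) : sampleProb c p = 1 := by
  simp only [sampleProb_eq_expect, hp, if_true]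
  exact expect_const (powersetCard_nonempty.2 hc) 1

theorem sampleProb_mono {c : ℕ} {p q : Finset ι → Prop} (hpq : ∀ S, p S → q S) :
    sampleProb c p ≤ sampleProb c q := by
  rw [sampleProb, sampleProb]
  gcongr with S
  exact hpq S

theorem one_sub_sub_le_sampleProb_and {c : ℕ} (hc : c ≤ Fintype.card ι)
    (p q : Finset ι → Prop) :
    1 - sampleProb c (fun S => ¬p S) - sampleProb c (fun S => ¬q S) ≤
      sampleProb c fun S => p S ∧ q S := by
  have hne : (powersetCard c (univ : Finset ι)).Nonempty := powersetCard_nonempty.2 hc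
  simp only [sampleProb_eq_expect]
  nth_rw 1 [← expect_const hne (1 : ℝ)]
  rw [← expect_sub_distrib, ← expect_sub_distrib]
  refine expect_le_expect fun S _ => ?_
  by_cases hp : p S <;> by_cases hq : q S <;> simp [hp, hq]

theorem mul_sampleProb_le_expect {c : ℕ} {F : Finset ι → ℝ} (hF : ∀ S, 0 ≤ F S) (a : ℝ) :
    a * sampleProb c (fun S => a ≤ F S) ≤ 𝔼 S ∈ powersetCard c univ, F S := by
  rw [sampleProb_eq_expect, mul_expect]
  refine expect_le_expect fun S _ => ?_
  split_ifs with ha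
  · rwa [mul_one]
  · rw [mul_zero]
    exact hF S

theorem sampleProb_expect_div_lt_le {c : ℕ} {F : Finset ι → ℝ} (hF : ∀ S, 0 ≤ F S) {δ : ℝ}
    (hδ : 0 < δ) :
    sampleProb c (fun S => (𝔼 T ∈ powersetCard c univ, F T) / δ < F S) ≤ δ := by
  set E := 𝔼 T ∈ powersetCard c univ, F T with hE
  have hnonneg : 0 ≤ E := expect_nonneg fun S _ => hF S
  rcases hnonneg.eq_or_lt with hzero | hpos
  · have hvanish := (expect_eq_zero_iff_of_nonneg fun S _ => hF S).1 (hE.symm.trans hzero.symm)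
    rw [sampleProb_eq_expect, expect_eq_zero fun S hS => if_neg ?_]
    · exact hδ.le
    · rw [hvanish S hS, ← hzero, zero_div]
      exact lt_irrefl 0
  · have hmarkov : E / δ * sampleProb c (fun S => E / δ < F S) ≤ E :=
      (mul_le_mul_of_nonneg_left (sampleProb_mono fun S => le_of_lt) (by positivity)).trans
        (mul_sampleProb_le_expect hF _)
    rwa [div_mul_eq_mul_div, div_le_iff₀ hδ, mul_le_mul_iff_right₀ hpos] at hmarkov

theorem sum_powersetCard_sum_compl [DecidableEq ι] (c : ℕ) (h : Finset ι → ι → ℝ) :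
    ∑ S ∈ powersetCard c univ, ∑ i ∈ Sᶜ, h S i =
      ∑ T ∈ powersetCard (c + 1) univ, ∑ i ∈ T, h (T.erase i) i := by
  rw [sum_sigma', sum_sigma']
  refine sum_bij' (fun p _ => ⟨insert p.2 p.1, p.2⟩) (fun p _ => ⟨p.1.erase p.2, p.2⟩)
    ?_ ?_ ?_ ?_ ?_ <;> rintro ⟨S, i⟩ hp <;>
    simp only [mem_sigma, mem_powersetCard_univ, mem_compl] at hp ⊢
  · exact ⟨by rw [card_insert_of_notMem hp.2, hp.1], mem_insert_self _ _⟩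
  · exact ⟨by rw [card_erase_of_mem hp.2, hp.1, Nat.add_sub_cancel], notMem_erase _ _⟩
  · rw [erase_insert hp.2]
  · rw [insert_erase hp.2]
  · rw [erase_insert hp.2]

theorem expect_expect_compl [DecidableEq ι] (c : ℕ) (h : Finset ι → ι → ℝ) :
    𝔼 S ∈ powersetCard c univ, 𝔼 i ∈ Sᶜ, h S i =
      𝔼 T ∈ powersetCard (c + 1) univ, 𝔼 i ∈ T, h (T.erase i) i := by
  have hinner : ∀ S ∈ powersetCard c (univ : Finset ι),
      𝔼 i ∈ Sᶜ, h S i = (∑ i ∈ Sᶜ, h S i) / (Fintype.card ι - c : ℕ) := fun S hS => by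
    rw [expect_eq_sum_div_card, card_compl, mem_powersetCard_univ.1 hS]
  have hinner' : ∀ T ∈ powersetCard (c + 1) (univ : Finset ι),
      𝔼 i ∈ T, h (T.erase i) i = (∑ i ∈ T, h (T.erase i) i) / (c + 1 : ℕ) := fun T hT => by
    rw [expect_eq_sum_div_card, mem_powersetCard_univ.1 hT]
  rw [expect_congr rfl hinner, expect_congr rfl hinner', ← expect_div, ← expect_div,
    expect_eq_sum_div_card, expect_eq_sum_div_card, sum_powersetCard_sum_compl, card_powersetCard,
    card_powersetCard, card_univ, div_div, div_div, ← Nat.cast_mul, ← Nat.cast_mul,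
    Nat.choose_succ_right_eq]

section Domination

variable {E : Type*} [AddCommGroup E] {φ : E → ℝ}

theorem le_expect_expect_add_sub {κ : Type*} (hφ : ∀ a v, 2 * φ a ≤ φ (a + v) + φ (a - v))
    {T : Finset κ} (hT : T.Nonempty) (f : κ → E) (a : E) :
    φ a ≤ 𝔼 j ∈ T, 𝔼 i ∈ T, φ (a + (f i - f j)) := by
  have hsym : 2 * φ a ≤ 𝔼 j ∈ T, 𝔼 i ∈ T, (φ (a + (f i - f j)) + φ (a - (f i - f j))) :=
    le_expect hT fun j _ => le_expect hT fun i _ => hφ a (f i - f j)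
  have hswap : 𝔼 j ∈ T, 𝔼 i ∈ T, φ (a - (f i - f j)) = 𝔼 j ∈ T, 𝔼 i ∈ T, φ (a + (f i - f j)) := by
    rw [expect_comm]
    simp only [sub_eq_add_neg, neg_add_rev, neg_neg]
  simp only [expect_add_distrib, hswap] at hsym
  linarith

theorem card_mul_le_expect_sum_erase {κ : Type*} [DecidableEq κ]
    (hφ : ∀ a v, 2 * φ a ≤ φ (a + v) + φ (a - v)) {T : Finset κ} {c : ℕ} (hT : #T = c + 1)
    (f : κ → E) :
    c * φ (∑ k ∈ T, f k) ≤ 𝔼 j ∈ T, ∑ i ∈ T.erase j, φ (∑ k ∈ T.erase j, f k + f i) := by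
  have hne : T.Nonempty := card_pos.1 (by omega)
  set a := ∑ k ∈ T, f k with ha
  have hinner : ∀ j ∈ T, (c + 1 : ℝ) * 𝔼 i ∈ T, φ (a + (f i - f j)) =
      ∑ i ∈ T.erase j, φ (∑ k ∈ T.erase j, f k + f i) + φ a := fun j hj => by
    have hcard := card_mul_expect T fun i => φ (a + (f i - f j))
    rw [hT, Nat.cast_succ] at hcard
    rw [hcard, ← sum_erase_add _ _ hj, sub_self, add_zero, sum_erase_eq_sub (f := f) hj, ← ha]
    simp only [sub_add_eq_add_sub, add_sub_assoc]
  have hle := mul_le_mul_of_nonneg_left (le_expect_expect_add_sub hφ hne f a)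
    (by positivity : (0 : ℝ) ≤ c + 1)
  rw [mul_expect, expect_congr rfl hinner, expect_add_distrib, expect_const hne] at hle
  linarith

theorem expect_powersetCard_succ_le (hφ : ∀ a v, 2 * φ a ≤ φ (a + v) + φ (a - v)) {c : ℕ}
    (hc : c < Fintype.card ι) (f : ι → E) :
    𝔼 T ∈ powersetCard (c + 1) univ, φ (∑ k ∈ T, f k) ≤
      𝔼 S ∈ powersetCard c univ, 𝔼 i, φ (∑ k ∈ S, f k + f i) := by
  set Z := 𝔼 T ∈ powersetCard (c + 1) univ, φ (∑ k ∈ T, f k)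
  have hcard : ∀ S ∈ powersetCard c (univ : Finset ι), #Sᶜ = Fintype.card ι - c :=
    fun S hS => by rw [card_compl, mem_powersetCard_univ.1 hS]
  have hnew : 𝔼 S ∈ powersetCard c univ, 𝔼 i ∈ Sᶜ, φ (∑ k ∈ S, f k + f i) = Z := by
    rw [expect_expect_compl c fun S i => φ (∑ k ∈ S, f k + f i)]
    refine expect_congr rfl fun T hT => ?_
    have hne : T.Nonempty := card_pos.1 (by rw [mem_powersetCard_univ.1 hT]; omega)
    rw [expect_congr rfl fun i hi => by rw [sum_erase_add _ _ hi], expect_const hne]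
  have hrepeat : c * Z ≤ 𝔼 S ∈ powersetCard c univ, ∑ i ∈ S, φ (∑ k ∈ S, f k + f i) := by
    calc c * Z ≤ 𝔼 T ∈ powersetCard (c + 1) univ,
          𝔼 j ∈ T, ∑ i ∈ T.erase j, φ (∑ k ∈ T.erase j, f k + f i) := by
          rw [mul_expect]
          exact expect_le_expect fun T hT =>
            card_mul_le_expect_sum_erase hφ (mem_powersetCard_univ.1 hT) f
      _ = 𝔼 S ∈ powersetCard c univ, 𝔼 _j ∈ Sᶜ, ∑ i ∈ S, φ (∑ k ∈ S, f k + f i) :=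
          (expect_expect_compl c fun S _ => ∑ i ∈ S, φ (∑ k ∈ S, f k + f i)).symm
      _ = 𝔼 S ∈ powersetCard c univ, ∑ i ∈ S, φ (∑ k ∈ S, f k + f i) :=
          expect_congr rfl fun S hS =>
            expect_const (card_pos.1 (by rw [hcard S hS]; omega)) _
  have hsplit : ∀ S ∈ powersetCard c univ, Fintype.card ι * 𝔼 i, φ (∑ k ∈ S, f k + f i) =
      ∑ i ∈ S, φ (∑ k ∈ S, f k + f i) +
        (Fintype.card ι - c) * 𝔼 i ∈ Sᶜ, φ (∑ k ∈ S, f k + f i) := fun S hS => by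
    rw [← Nat.cast_sub hc.le, ← hcard S hS, card_mul_expect, sum_add_sum_compl,
      Fintype.card_mul_expect]
  have hpos : (0 : ℝ) < Fintype.card ι := Nat.cast_pos.2 (by omega)
  refine le_of_mul_le_mul_left ?_ hpos
  rw [mul_expect (powersetCard c univ), expect_congr rfl hsplit, expect_add_distrib, ← mul_expect,
    hnew]
  linarith

theorem expect_powersetCard_le_pow_mul (hφ : ∀ a v, 2 * φ a ≤ φ (a + v) + φ (a - v))
    {f : ι → E} {κ : ℝ} (hκ : 0 ≤ κ) (hstep : ∀ a, 𝔼 i, φ (a + f i) ≤ κ * φ a) {c : ℕ}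
    (hc : c ≤ Fintype.card ι) :
    𝔼 S ∈ powersetCard c univ, φ (∑ i ∈ S, f i) ≤ κ ^ c * φ 0 := by
  induction c with
  | zero => simp
  | succ c ih =>
    calc 𝔼 S ∈ powersetCard (c + 1) univ, φ (∑ i ∈ S, f i)
        ≤ 𝔼 S ∈ powersetCard c univ, 𝔼 i, φ (∑ k ∈ S, f k + f i) :=
          expect_powersetCard_succ_le hφ hc f
      _ ≤ κ * 𝔼 S ∈ powersetCard c univ, φ (∑ i ∈ S, f i) := by
          rw [mul_expect]
          exact expect_le_expect fun S _ => hstep _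
      _ ≤ κ * (κ ^ c * φ 0) := mul_le_mul_of_nonneg_left (ih (by omega)) hκ
      _ = κ ^ (c + 1) * φ 0 := by ring

end Domination

theorem expect_powersetCard_sum_le (g : ι → ℝ) {c : ℕ} (hc : c ≤ Fintype.card ι) :
    𝔼 S ∈ powersetCard c univ, ∑ i ∈ S, g i ≤ c * 𝔼 i, g i := by
  induction c with
  | zero => simp
  | succ c ih =>
    have hι : (univ : Finset ι).Nonempty := card_pos.1 (by rw [card_univ]; omega)
    have hne : (powersetCard c (univ : Finset ι)).Nonempty :=
      powersetCard_nonempty.2 (by rw [card_univ]; omega)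
    have hsucc := expect_powersetCard_succ_le (φ := id) (fun a v : ℝ => by simp [two_mul]) hc g
    simp only [id, expect_add_distrib, expect_const hι, expect_const hne] at hsucc
    push_cast
    linarith [ih (by omega)]

theorem expect_powersetCard_sum (g : ι → ℝ) {c : ℕ} (hc : c ≤ Fintype.card ι) :
    𝔼 S ∈ powersetCard c univ, ∑ i ∈ S, g i = c * 𝔼 i, g i := by
  have hneg := expect_powersetCard_sum_le (fun i => -g i) hc
  simp only [sum_neg_distrib, expect_neg_distrib, mul_neg, neg_le_neg_iff] at hneg
  exact le_antisymm (expect_powersetCard_sum_le g hc) hneg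

end SamplingWithoutReplacement

section MatrixChernoff

open Finset
open NormedSpace (exp)
open scoped ComplexOrder MatrixOrder

variable {𝕜 ι m : Type*} [RCLike 𝕜] [Fintype ι] [Fintype m] [DecidableEq m]

theorem expect_powersetCard_traceExp_sum_le {f : ι → Matrix m m 𝕜} (hf : ∀ i, (f i).IsHermitian)
    {κ : ℝ} (hκ : 0 ≤ κ)
    (hstep : ∀ A : Matrix m m 𝕜, A.IsHermitian → 𝔼 i, traceExp (A + f i) ≤ κ * traceExp A)
    {c : ℕ} (hc : c ≤ Fintype.card ι) :
    𝔼 S ∈ powersetCard c univ, traceExp (∑ i ∈ S, f i) ≤ κ ^ c * Fintype.card m := by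
  have h := expect_powersetCard_le_pow_mul (E := selfAdjoint (Matrix m m 𝕜))
    (φ := fun A => traceExp A.1) (fun A D => two_mul_traceExp_le A.2 D.2)
    (f := fun i => ⟨f i, hf i⟩) hκ (fun A => hstep A.1 A.2) hc
  simpa [traceExp] using h

theorem expect_traceExp_add_smul_le [Nonempty ι] {f : ι → Matrix m m 𝕜} (hf : ∀ i, 0 ≤ f i)
    {M : ℝ} (hM : 0 < M) (hfM : ∀ i, f i ≤ M • (1 : Matrix m m 𝕜)) {ρ : ℝ}
    (hρ : ρ • (1 : Matrix m m 𝕜) ≤ 𝔼 i, f i) {s : ℝ} (hs : s ≤ 0) {A : Matrix m m 𝕜}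
    (hA : A.IsHermitian) :
    𝔼 i, traceExp (A + s • f i) ≤ Real.exp ((Real.exp (s * M) - 1) / M * ρ) * traceExp A := by
  set k := (Real.exp (s * M) - 1) / M
  have hk0 : k ≤ 0 := div_nonpos_of_nonpos_of_nonneg
    (sub_nonpos.2 (Real.exp_le_one_iff.2 (mul_nonpos_of_nonpos_of_nonneg hs hM.le))) hM.le
  have hmean : 𝔼 i, RCLike.re (trace (exp A * f i)) = RCLike.re (trace (exp A * 𝔼 i, f i)) := by
    rw [mul_expect]
    simp only [expect, trace_smul, trace_sum, map_nnrat_smul, map_sum]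
  have hρA : ρ * traceExp A ≤ RCLike.re (trace (exp A * 𝔼 i, f i)) := by
    have := re_trace_mul_le_re_trace_mul (posSemidef_exp hA) hρ
    rwa [mul_smul_comm, mul_one, trace_smul, RCLike.smul_re] at this
  calc 𝔼 i, traceExp (A + s • f i)
      ≤ 𝔼 i, (traceExp A + k * RCLike.re (trace (exp A * f i))) :=
        expect_le_expect fun i _ => traceExp_add_smul_le hA (hf i) hM (hfM i) s
    _ = traceExp A + k * RCLike.re (trace (exp A * 𝔼 i, f i)) := by
        rw [expect_add_distrib, expect_const univ_nonempty, ← mul_expect, hmean]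
    _ ≤ traceExp A + k * (ρ * traceExp A) := by
        gcongr traceExp A + ?_
        exact mul_le_mul_of_nonpos_left hρA hk0
    _ = (k * ρ + 1) * traceExp A := by ring
    _ ≤ Real.exp (k * ρ) * traceExp A :=
        mul_le_mul_of_nonneg_right (Real.add_one_le_exp _) (traceExp_nonneg hA)

theorem sampleProb_not_le_sum_le [Nonempty ι] {f : ι → Matrix m m 𝕜} (hf : ∀ i, 0 ≤ f i)
    {M : ℝ} (hM : 0 < M) (hfM : ∀ i, f i ≤ M • (1 : Matrix m m 𝕜)) {ρ : ℝ}
    (hρ : ρ • (1 : Matrix m m 𝕜) ≤ 𝔼 i, f i) {θ : ℝ} (hθ : θ ∈ Set.Ioo (0 : ℝ) 1) {c : ℕ}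
    (hc : c ≤ Fintype.card ι) :
    sampleProb c (fun S => ¬(θ * c * ρ) • (1 : Matrix m m 𝕜) ≤ ∑ i ∈ S, f i) ≤
      Fintype.card m * Real.exp (-(c * ρ * (θ * Real.log θ - θ + 1) / M)) := by
  set s := Real.log θ / M with hs
  have hs0 : s < 0 := div_neg_of_neg_of_pos (Real.log_neg hθ.1 hθ.2) hM
  have hsM : Real.exp (s * M) = θ := by rw [hs, div_mul_cancel₀ _ hM.ne', Real.exp_log hθ.1]
  have hfs : ∀ i, (s • f i).IsHermitian := fun i =>
    (nonneg_iff_posSemidef.1 (hf i)).isHermitian.smul (IsSelfAdjoint.all s)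
  have hherm : ∀ S : Finset ι, (∑ i ∈ S, s • f i).IsHermitian := fun S =>
    isSelfAdjoint_sum S fun i _ => hfs i
  have hmgf := expect_powersetCard_traceExp_sum_le hfs (Real.exp_pos _).le
    (fun A hA => expect_traceExp_add_smul_le hf hM hfM hρ hs0.le hA) hc
  have hbad : ∀ S : Finset ι, ¬(θ * c * ρ) • (1 : Matrix m m 𝕜) ≤ ∑ i ∈ S, f i →
      Real.exp (s * (θ * c * ρ)) ≤ traceExp (∑ i ∈ S, s • f i) := fun S hS => by
    contrapose! hS
    have hle := le_smul_one_of_traceExp_le (hherm S) hS.le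
    rwa [← smul_sum, mul_smul, smul_le_smul_iff_of_neg_left hs0] at hle
  have hmarkov := (mul_le_mul_of_nonneg_left (sampleProb_mono hbad) (Real.exp_pos _).le).trans
    ((mul_sampleProb_le_expect (fun S => traceExp_nonneg (hherm S)) _).trans hmgf)
  rw [hsM, ← Real.exp_nat_mul, ← le_div_iff₀' (Real.exp_pos _)] at hmarkov
  refine hmarkov.trans_eq ?_
  rw [mul_div_right_comm, ← Real.exp_sub, mul_comm, hs]
  congr 2
  ring

end MatrixChernoff

section LeastSquares

open Finset
open scoped MatrixOrder

variable {ι k m : Type*}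

theorem mul_exp_neg_div_le {a b d δ : ℝ} (ha : 0 < a) (hd : 0 < d) (hδ : 0 < δ)
    (h : a * Real.log (d / δ) ≤ b) : d * Real.exp (-(b / a)) ≤ δ := by
  calc d * Real.exp (-(b / a))
      ≤ d * Real.exp (-Real.log (d / δ)) := by
        gcongr
        rwa [le_div_iff₀' ha]
    _ = δ := by rw [Real.exp_neg, Real.exp_log (div_pos hd hδ), inv_div, mul_div_cancel₀ _ hd.ne']

section OuterProducts

theorem dotProduct_vecMulVec_self_mulVec [Fintype m] (u w : m → ℝ) :
    w ⬝ᵥ vecMulVec u u *ᵥ w = (u ⬝ᵥ w) ^ 2 := by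
  rw [vecMulVec_mulVec, op_smul_eq_smul, dotProduct_smul, smul_eq_mul, dotProduct_comm w, sq]

theorem vecMulVec_self_le_smul_one [Fintype m] [DecidableEq m] (u : m → ℝ) :
    vecMulVec u u ≤ (∑ j, u j ^ 2) • (1 : Matrix m m ℝ) := by
  refine Matrix.le_iff.2 (.of_dotProduct_mulVec_nonneg ?_ fun w => ?_)
  · exact (isHermitian_one.smul (IsSelfAdjoint.all _)).sub
      (posSemidef_vecMulVec_self_star u).isHermitian
  · rw [star_trivial, sub_mulVec, dotProduct_sub, dotProduct_vecMulVec_self_mulVec, smul_mulVec,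
      one_mulVec, dotProduct_smul, smul_eq_mul, sub_nonneg]
    simpa only [dotProduct, sq] using sum_mul_sq_le_sq_mul_sq univ u w

theorem sum_vecMulVec_self [Fintype ι] (U : Matrix ι m ℝ) :
    ∑ i, vecMulVec (U i) (U i) = Uᵀ * U := by
  ext a b
  simp only [Matrix.sum_apply, vecMulVec_apply, mul_apply, transpose_apply]

theorem mul_dotProduct_self_le_sum_sq_mulVec [Fintype m] [DecidableEq m] {U : Matrix ι m ℝ}
    {S : Finset ι} {ρ : ℝ}
    (hρ : ρ • (1 : Matrix m m ℝ) ≤ ∑ i ∈ S, vecMulVec (U i) (U i)) (w : m → ℝ) :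
    ρ * (w ⬝ᵥ w) ≤ ∑ i ∈ S, (U *ᵥ w) i ^ 2 := by
  have h := (Matrix.le_iff.1 hρ).dotProduct_mulVec_nonneg w
  simp only [star_trivial, sub_mulVec, sum_mulVec, dotProduct_sub, dotProduct_sum,
    dotProduct_vecMulVec_self_mulVec, smul_mulVec, one_mulVec, dotProduct_smul, smul_eq_mul,
    sub_nonneg] at h
  exact h

end OuterProducts

section Coherence

variable [Fintype ι] [Fintype m] {U : Matrix ι m ℝ}

/-- The squared Euclidean norm of the `i`-th row of `U`. When the columns of `U` are orthonormal,
this is the leverage score of the `i`-th row of any matrix with the same column space. -/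
def leverageScore (U : Matrix ι m ℝ) (i : ι) : ℝ := ∑ j, U i j ^ 2

/-- The matrix coherence `(n / d) maxᵢ lᵢ` of the column space of `U`, whose columns are meant to be
orthonormal. It is `0` by convention when `U` has no columns or no rows. -/
noncomputable def coherence (U : Matrix ι m ℝ) : ℝ :=
  Fintype.card ι / Fintype.card m * ⨆ i, leverageScore U i

theorem leverageScore_le_coherence_mul_div [Nonempty m] (U : Matrix ι m ℝ) (i : ι) :
    leverageScore U i ≤ coherence U * Fintype.card m / Fintype.card ι := by
  have : Nonempty ι := ⟨i⟩
  rw [coherence, mul_right_comm, div_mul_cancel₀ _ (Nat.cast_ne_zero.2 Fintype.card_ne_zero),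
    mul_div_cancel_left₀ _ (Nat.cast_ne_zero.2 Fintype.card_ne_zero)]
  exact le_ciSup (Set.finite_range (leverageScore U)).bddAbove i

theorem sum_leverageScore [DecidableEq m] (hU : Uᵀ * U = 1) :
    ∑ i, leverageScore U i = Fintype.card m := by
  simp only [leverageScore, sq]
  rw [← trace_one (R := ℝ), ← hU, sum_comm]
  rfl

theorem one_le_coherence [DecidableEq m] [Nonempty m] (hU : Uᵀ * U = 1) : 1 ≤ coherence U := by
  have hm : (0 : ℝ) < Fintype.card m := Nat.cast_pos.2 Fintype.card_pos
  have hle := sum_le_card_nsmul univ _ _ fun i _ => leverageScore_le_coherence_mul_div U i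
  rw [sum_leverageScore hU, card_univ, nsmul_eq_mul] at hle
  rcases isEmpty_or_nonempty ι with hι | hι
  · simp [hm.not_ge] at hle
  · rw [mul_div_cancel₀ _ (Nat.cast_ne_zero.2 Fintype.card_ne_zero)] at hle
    exact (le_mul_iff_one_le_left hm).1 hle

theorem sampleProb_not_forall_le_sum_sq_mulVec_le [DecidableEq m] [Nonempty m] (hU : Uᵀ * U = 1)
    {θ : ℝ} (hθ : θ ∈ Set.Ioo (0 : ℝ) 1) {c : ℕ} (hc : c ≤ Fintype.card ι) :
    sampleProb c (fun S => ¬∀ w : m → ℝ,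
        θ * (c / Fintype.card ι) * (w ⬝ᵥ w) ≤ ∑ i ∈ S, (U *ᵥ w) i ^ 2) ≤
      Fintype.card m *
        Real.exp (-(c * (θ * Real.log θ - θ + 1) / (coherence U * Fintype.card m))) := by
  have : Nonempty ι := by
    by_contra hι
    have := one_le_coherence hU
    simp [coherence, not_nonempty_iff.1 hι, zero_lt_one.not_ge] at this
  have hμ : 0 < coherence U := zero_lt_one.trans_le (one_le_coherence hU)
  have hf : ∀ i, 0 ≤ vecMulVec (U i) (U i) := fun i => (posSemidef_vecMulVec_self_star _).nonneg
  have hle : ∀ i, vecMulVec (U i) (U i) ≤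
      (coherence U * Fintype.card m / Fintype.card ι) • (1 : Matrix m m ℝ) := fun i =>
    (vecMulVec_self_le_smul_one _).trans
      (smul_le_smul_of_nonneg_right (leverageScore_le_coherence_mul_div U i) zero_le_one)
  have hmean : (1 / Fintype.card ι : ℝ) • (1 : Matrix m m ℝ) ≤ 𝔼 i, vecMulVec (U i) (U i) := by
    rw [expect_univ, sum_vecMulVec_self, hU, one_div, ← NNRat.cast_smul_eq_nnqsmul ℝ]
    simp
  refine (sampleProb_mono fun S hS hle => ?_).trans
    ((sampleProb_not_le_sum_le hf (by positivity) hle hmean hθ hc).trans_eq ?_)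
  · exact hS fun w => (mul_dotProduct_self_le_sum_sq_mulVec hle w).trans'
      (by rw [mul_one_div, mul_div_assoc])
  · congr 3
    field_simp

end Coherence

section Residual

variable [Fintype k] {X : Matrix ι k ℝ} {y : ι → ℝ}

/-- The least-squares objective `β ↦ ∑ i ∈ S, (yᵢ - x⁽ⁱ⁾β)²` restricted to the rows in `S`. -/
def sampledLoss (X : Matrix ι k ℝ) (y : ι → ℝ) (S : Finset ι) (β : k → ℝ) : ℝ :=
  ∑ i ∈ S, (y i - (X *ᵥ β) i) ^ 2

theorem sampledLoss_add_smul (X : Matrix ι k ℝ) (y : ι → ℝ) (S : Finset ι) (β v : k → ℝ) (t : ℝ) :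
    sampledLoss X y S (β + t • v) =
      (∑ i ∈ S, (X *ᵥ v) i ^ 2) * (t * t) + -2 * (∑ i ∈ S, (y i - (X *ᵥ β) i) * (X *ᵥ v) i) * t +
        sampledLoss X y S β := by
  simp only [sampledLoss, mul_sum, sum_mul, ← sum_add_distrib]
  refine sum_congr rfl fun i _ => ?_
  rw [mulVec_add, mulVec_smul, Pi.add_apply, Pi.smul_apply, smul_eq_mul]
  ring

theorem sampledLoss_add_eq_of_minimizer {S : Finset ι} {βt : k → ℝ}
    (hmin : ∀ β, sampledLoss X y S βt ≤ sampledLoss X y S β) (v : k → ℝ) :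
    sampledLoss X y S (βt + v) = ∑ i ∈ S, (X *ᵥ v) i ^ 2 + sampledLoss X y S βt := by
  have hdiscrim := discrim_le_zero fun t => (sub_nonneg.2 (hmin (βt + t • v))).trans_eq <| by
    rw [sampledLoss_add_smul, add_sub_assoc, sub_self]
  have horth : ∑ i ∈ S, (y i - (X *ᵥ βt) i) * (X *ᵥ v) i = 0 := by
    rw [discrim, mul_zero, sub_zero] at hdiscrim
    simpa using hdiscrim.antisymm (sq_nonneg _)
  simpa [horth] using sampledLoss_add_smul X y S βt v 1

theorem sum_sq_mulVec_sub_le_sampledLoss {S : Finset ι} {βt : k → ℝ}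
    (hmin : ∀ β, sampledLoss X y S βt ≤ sampledLoss X y S β) (β : k → ℝ) :
    ∑ i ∈ S, (X *ᵥ (β - βt)) i ^ 2 ≤ sampledLoss X y S β := by
  have h := sampledLoss_add_eq_of_minimizer hmin (β - βt)
  rw [add_sub_cancel] at h
  rw [h]
  exact le_add_of_nonneg_right (sum_nonneg fun i _ => sq_nonneg _)

theorem sampleProb_not_sampledLoss_le [Fintype ι] (X : Matrix ι k ℝ) (y : ι → ℝ) (β : k → ℝ) {δ : ℝ}
    (hδ : 0 < δ) {c : ℕ} (hc : c ≤ Fintype.card ι) :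
    sampleProb c (fun S =>
      ¬sampledLoss X y S β ≤ c / Fintype.card ι * sampledLoss X y univ β / δ) ≤ δ := by
  have hmean := expect_powersetCard_sum (fun i => (y i - (X *ᵥ β) i) ^ 2) hc
  rw [expect_eq_sum_div_card univ, card_univ, ← mul_div_assoc, mul_div_right_comm] at hmean
  have h := sampleProb_expect_div_lt_le (c := c) (F := fun S => sampledLoss X y S β)
    (fun S => sum_nonneg fun i _ => sq_nonneg _) hδ
  simp only [sampledLoss, hmean] at h
  simpa only [not_le, sampledLoss] using h

end Residual

section NormalEquations

variable [Fintype ι] [Fintype k]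

theorem transpose_mul_self_mulVec_leastSquares [DecidableEq k] {X : Matrix ι k ℝ}
    (hX : X.rank = Fintype.card k)
    (y : ι → ℝ) : (Xᵀ * X) *ᵥ (((Xᵀ * X)⁻¹ * Xᵀ) *ᵥ y) = Xᵀ *ᵥ y := by
  have hunit : IsUnit (Xᵀ * X) := by
    refine mulVec_surjective_iff_isUnit.1 (LinearMap.range_eq_top (f := (Xᵀ * X).mulVecLin).1 ?_)
    refine Submodule.eq_top_of_finrank_eq ?_
    rw [← Matrix.rank, rank_transpose_mul_self, hX, Module.finrank_fintype_fun_eq_card]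
  rw [mulVec_mulVec, ← Matrix.mul_assoc,
    mul_nonsing_inv _ ((isUnit_iff_isUnit_det _).1 hunit), Matrix.one_mul]

variable [Fintype m] [DecidableEq m] {X : Matrix ι k ℝ} {U : Matrix ι m ℝ}

theorem mulVec_eq_mulVec_transpose_mul_mulVec (hU : Uᵀ * U = 1)
    (hcol : LinearMap.range X.mulVecLin ≤ LinearMap.range U.mulVecLin) (v : k → ℝ) :
    X *ᵥ v = U *ᵥ ((Uᵀ * X) *ᵥ v) := by
  obtain ⟨z, hz : U *ᵥ z = X *ᵥ v⟩ := hcol ⟨v, rfl⟩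
  rw [← mulVec_mulVec, ← hz, mulVec_mulVec z Uᵀ, hU, one_mulVec]

theorem mulVec_eq_mul_transpose_mulVec_of_normal (hU : Uᵀ * U = 1)
    (hcol : LinearMap.range U.mulVecLin = LinearMap.range X.mulVecLin) {y : ι → ℝ} {β : k → ℝ}
    (hβ : (Xᵀ * X) *ᵥ β = Xᵀ *ᵥ y) : X *ᵥ β = (U * Uᵀ) *ᵥ y := by
  set z := Uᵀ *ᵥ (X *ᵥ β - y) with hz
  obtain ⟨b, hb : X *ᵥ b = U *ᵥ z⟩ := hcol.le ⟨z, rfl⟩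
  have hXres : Xᵀ *ᵥ (X *ᵥ β - y) = 0 := by rw [mulVec_sub, mulVec_mulVec, hβ, sub_self]
  have hUres : z = 0 := dotProduct_self_eq_zero.1 <| by
    nth_rw 2 [hz]
    rw [dotProduct_mulVec, vecMul_transpose, ← hb, ← vecMul_transpose, ← dotProduct_mulVec, hXres,
      dotProduct_zero]
  rw [hz, mulVec_sub, sub_eq_zero] at hUres
  rw [mulVec_eq_mulVec_transpose_mul_mulVec hU hcol.ge, ← mulVec_mulVec, hUres, mulVec_mulVec]

end NormalEquations

theorem vnorm_eq_norm_toLp {n : ℕ} (v : Fin n → ℝ) : vnorm v = ‖WithLp.toLp 2 v‖ := by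
  simp [vnorm, EuclideanSpace.norm_eq]

theorem inv_sqrt_mul_le {a b : ℝ} (ha : 0 < a) (hab : a ≤ b) (δ : ℝ) :
    (√(a * δ))⁻¹ ≤ 1 / a * √(b / δ) := by
  calc (√(a * δ))⁻¹ = 1 / a * (√a / √δ) := by
        rw [Real.sqrt_mul ha.le, mul_inv, ← Real.sqrt_div_self]
        ring
    _ ≤ 1 / a * (√b / √δ) := by gcongr
    _ = 1 / a * √(b / δ) := by rw [Real.sqrt_div (ha.le.trans hab)]

section Approximation

variable [Fintype ι] [Fintype k] [Fintype m] {X : Matrix ι k ℝ} {U : Matrix ι m ℝ} {y : ι → ℝ}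

theorem sampledLoss_univ (X : Matrix ι k ℝ) (y : ι → ℝ) (β : k → ℝ) :
    sampledLoss X y univ β = ‖WithLp.toLp 2 (y - X *ᵥ β)‖ ^ 2 := by
  simp [sampledLoss, EuclideanSpace.real_norm_sq_eq]

theorem norm_le_of_sampled_minimizer [DecidableEq m] (hU : Uᵀ * U = 1)
    (hcol : LinearMap.range X.mulVecLin ≤ LinearMap.range U.mulVecLin) {S : Finset ι}
    {κ θ δ : ℝ} (hκ : 0 < κ) (hθ : 0 < θ) (hδ : 0 < δ)
    (hiso : ∀ w : m → ℝ, θ * κ * (w ⬝ᵥ w) ≤ ∑ i ∈ S, (U *ᵥ w) i ^ 2) {β βt : k → ℝ}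
    (hres : sampledLoss X y S β ≤ κ * sampledLoss X y univ β / δ)
    (hmin : ∀ γ, sampledLoss X y S βt ≤ sampledLoss X y S γ) :
    ‖WithLp.toLp 2 ((Uᵀ * X) *ᵥ (β - βt))‖ ≤ ‖WithLp.toLp 2 (y - X *ᵥ β)‖ / √(θ * δ) := by
  set w := (Uᵀ * X) *ᵥ (β - βt) with hw
  have hnorm : w ⬝ᵥ w = ‖WithLp.toLp 2 w‖ ^ 2 := by
    rw [EuclideanSpace.real_norm_sq_eq]
    simp only [dotProduct, sq]
  have hfit := sum_sq_mulVec_sub_le_sampledLoss hmin β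
  rw [mulVec_eq_mulVec_transpose_mul_mulVec hU hcol, ← hw] at hfit
  have hchain := (hiso w).trans (hfit.trans hres)
  rw [hnorm, sampledLoss_univ, le_div_iff₀ hδ] at hchain
  have hsq : (‖WithLp.toLp 2 w‖ * √(θ * δ)) ^ 2 ≤ ‖WithLp.toLp 2 (y - X *ᵥ β)‖ ^ 2 := by
    rw [mul_pow, Real.sq_sqrt (by positivity)]
    refine le_of_mul_le_mul_left ?_ hκ
    linarith
  rw [le_div_iff₀ (by positivity)]
  exact (pow_le_pow_iff_left₀ (by positivity) (norm_nonneg _) two_ne_zero).1 hsq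

theorem stmt_13_general [DecidableEq m] (hU : Uᵀ * U = 1)
    (hcol : LinearMap.range U.mulVecLin = LinearMap.range X.mulVecLin) {β : k → ℝ}
    (hβ : (Xᵀ * X) *ᵥ β = Xᵀ *ᵥ y) {θ δ₁ δ₃ : ℝ} (hθ : θ ∈ Set.Ioo (0 : ℝ) 1)
    (hδ₁ : δ₁ ∈ Set.Ioo (0 : ℝ) 1) (hδ₃ : 0 < δ₃) {c : ℕ} (hc : c ≤ Fintype.card ι)
    (hμ : coherence U * Fintype.card m * Real.log (Fintype.card m / δ₁) ≤
      c * (θ * Real.log θ - θ + 1)) :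
    1 - δ₁ - δ₃ ≤ sampleProb c fun S => ∀ βt : k → ℝ,
      (∀ γ, sampledLoss X y S βt ≤ sampledLoss X y S γ) →
        ‖WithLp.toLp 2 ((Uᵀ * X) *ᵥ (β - βt))‖ ≤
          ‖WithLp.toLp 2 (y - (U * Uᵀ) *ᵥ y)‖ / √(θ * δ₃) := by
  rcases isEmpty_or_nonempty m with hm | hm
  · rw [sampleProb_eq_one hc fun S βt _ => ?_]
    · linarith [hδ₁.1]
    · rw [Subsingleton.elim ((Uᵀ * X) *ᵥ (β - βt)) 0, WithLp.toLp_zero, norm_zero]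
      positivity
  have hd : (1 : ℝ) ≤ Fintype.card m := Nat.one_le_cast.2 Fintype.card_pos
  have ha : 0 < coherence U * Fintype.card m :=
    mul_pos (zero_lt_one.trans_le (one_le_coherence hU)) (zero_lt_one.trans_le hd)
  have hlog : 0 < Real.log (Fintype.card m / δ₁) :=
    Real.log_pos ((one_lt_div hδ₁.1).2 (hδ₁.2.trans_le hd))
  have hc0 : (0 : ℝ) < c :=
    c.cast_nonneg.lt_of_ne fun h => (mul_pos ha hlog).not_ge (by rwa [← h, zero_mul] at hμ)
  have hκ : (0 : ℝ) < c / Fintype.card ι := div_pos hc0 (hc0.trans_le (Nat.cast_le.2 hc))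
  have hiso := (sampleProb_not_forall_le_sum_sq_mulVec_le hU hθ hc).trans
    (mul_exp_neg_div_le ha (zero_lt_one.trans_le hd) hδ₁.1 hμ)
  have hres := sampleProb_not_sampledLoss_le X y β hδ₃ hc
  rw [← mulVec_eq_mul_transpose_mulVec_of_normal hU hcol hβ]
  refine le_trans ?_ ((one_sub_sub_le_sampleProb_and hc _ _).trans (sampleProb_mono fun S hS βt =>
    norm_le_of_sampled_minimizer hU hcol.ge hκ hθ.1 hδ₃ hS.1 hS.2))
  linarith

end Approximation

end LeastSquares

/-- Uniform-sampling least squares, key probabilistic bound: with probability at least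
`1 − δ₁ − δ₂ − δ₃` over a uniform `c`-subset `C`, every minimizer `β̃` of
`β ↦ Σ_{i∈C}(y_i − x^(i)β)²` satisfies
`‖UᵀX(β_lsr − β̃)‖ ≤ (1/θ₁)·√(θ₂/δ₃)·‖(I − UUᵀ)y‖`. -/
theorem stmt_13 {n d : ℕ} (hdn : d ≤ n)
    (X : Matrix (Fin n) (Fin d) ℝ) (hrank : X.rank = d)
    (y : Fin n → ℝ)
    (U : Matrix (Fin n) (Fin d) ℝ) (hU : Uᵀ * U = 1)
    (hcol : LinearMap.range U.mulVecLin = LinearMap.range X.mulVecLin)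
    (βlsr : Fin d → ℝ) (hβ : βlsr = ((Xᵀ * X)⁻¹ * Xᵀ).mulVec y)
    (μ : ℝ) (hμ : μ = ((n : ℝ) / d) * ⨆ i : Fin n, ∑ j, U i j ^ 2)
    (θ₁ θ₂ δ₁ δ₂ δ₃ : ℝ)
    (hθ₁ : θ₁ ∈ Set.Ioo (0 : ℝ) 1) (hθ₂ : 1 < θ₂)
    (hδ₁ : δ₁ ∈ Set.Ioo (0 : ℝ) 1) (hδ₂ : δ₂ ∈ Set.Ioo (0 : ℝ) 1)
    (hδ₃ : δ₃ ∈ Set.Ioo (0 : ℝ) 1)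
    (c : ℕ) (hcn : c ≤ n)
    (hc1 : μ * d * Real.log (d / δ₁) ≤ c * (θ₁ * Real.log θ₁ - θ₁ + 1))
    (hc2 : μ * d * Real.log (d / δ₂) ≤ c * (θ₂ * Real.log θ₂ - θ₂ + 1))
    (obj : Finset (Fin n) → (Fin d → ℝ) → ℝ)
    (hobj : obj = fun s β => ∑ i ∈ s, (y i - ∑ j, X i j * β j) ^ 2) :
    1 - δ₁ - δ₂ - δ₃ ≤
      (((Finset.univ : Finset (Fin n)).powersetCard c).filter
            (fun s => ∀ βt : Fin d → ℝ, (∀ β, obj s βt ≤ obj s β) →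
              vnorm ((Uᵀ * X).mulVec (βlsr - βt))
                ≤ (1 / θ₁) * Real.sqrt (θ₂ / δ₃) * vnorm (y - (U * Uᵀ).mulVec y))).card
        / (n.choose c : ℝ) := by
  have hnormal : (Xᵀ * X) *ᵥ βlsr = Xᵀ *ᵥ y :=
    hβ ▸ transpose_mul_self_mulVec_leastSquares (by rwa [Fintype.card_fin]) y
  have hcoh : coherence U * Fintype.card (Fin d) * Real.log (Fintype.card (Fin d) / δ₁) ≤
      c * (θ₁ * Real.log θ₁ - θ₁ + 1) := by
    simpa only [coherence, leverageScore, Fintype.card_fin, ← hμ] using hc1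
  have hgen := stmt_13_general hU hcol hnormal hθ₁ hδ₁ hδ₃.1 (by rwa [Fintype.card_fin]) hcoh
  rw [card_filter_div_choose_eq_sampleProb, hobj]
  refine le_trans (by linarith [hδ₂.1]) (hgen.trans (sampleProb_mono fun S hS βt hmin => ?_))
  rw [vnorm_eq_norm_toLp, vnorm_eq_norm_toLp]
  refine (hS βt hmin).trans ?_
  rw [div_eq_inv_mul]
  gcongr
  exact inv_sqrt_mul_le hθ₁.1 (hθ₁.2.trans hθ₂).le δ₃
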